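/- Let p : ℝ^d → ℝ be a continuously differentiable probability density with p(x) > 0 for all x, and let f : ℝ^d → ℝ^d be a continuously differentiable vector field. Assume that x ↦ p(x) * ⟨f(x), ∇(log ∘ p)(x)⟩ and x ↦ p(x) * div f(x) are integrable and that ∫ div(fun x => p(x) • f(x)) dx = 0. Then ∫ p(x) * ⟨f(x), ∇(log ∘ p)(x)⟩ dx = − ∫ p(x) * div f(x) dx (Stein's identity). -/

import Mathlib

open MeasureTheory Real
open scoped RealInnerProductSpace

/-- Divergence of a vector field on Euclidean space: trace of the Fréchet derivative. -/
noncomputable def vdiv {d : ℕ} (v : EuclideanSpace ℝ (Fin d) → EuclideanSpace ℝ (Fin d))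
    (x : EuclideanSpace ℝ (Fin d)) : ℝ :=
  LinearMap.trace ℝ (EuclideanSpace ℝ (Fin d)) (fderiv ℝ v x)

/-- Laplacian on Euclidean space: divergence of the gradient. -/
noncomputable def lap {d : ℕ} (f : EuclideanSpace ℝ (Fin d) → ℝ) :
    EuclideanSpace ℝ (Fin d) → ℝ :=
  vdiv (gradient f)

/-- Stein's identity. For a positive C¹ probability density `p` and a C¹
vector field `f`, if `∫ div (p • f) = 0` and the integrands are integrable, then
`∫ p ⟨f, ∇ log p⟩ = − ∫ p (div f)`. -/
theorem stein_identity
    (d : ℕ) (p : EuclideanSpace ℝ (Fin d) → ℝ)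
    (hp : ContDiff ℝ 1 p) (hpos : ∀ x, 0 < p x)
    (hpInt : Integrable p) (hpOne : ∫ x, p x = 1)
    (f : EuclideanSpace ℝ (Fin d) → EuclideanSpace ℝ (Fin d)) (hf : ContDiff ℝ 1 f)
    (hInt1 : Integrable fun x => p x * ⟪f x, gradient (Real.log ∘ p) x⟫)
    (hInt2 : Integrable fun x => p x * vdiv f x)
    (hDiv : ∫ x, vdiv (fun x => p x • f x) x = 0) :
    ∫ x, p x * ⟪f x, gradient (Real.log ∘ p) x⟫ = -∫ x, p x * vdiv f x := by
  have key : ∀ x, vdiv (fun x => p x • f x) x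
      = p x * ⟪f x, gradient (Real.log ∘ p) x⟫ + p x * vdiv f x := by
    intro x
    have hpd : DifferentiableAt ℝ p x := (hp.differentiable one_ne_zero) x
    have hfd : DifferentiableAt ℝ f x := (hf.differentiable one_ne_zero) x
    have h1 : ⟪f x, gradient (Real.log ∘ p) x⟫ = (p x)⁻¹ * fderiv ℝ p x (f x) := by
      rw [real_inner_comm, gradient, InnerProductSpace.toDual_symm_apply]
      have := (hpd.hasFDerivAt.log (hpos x).ne').fderiv
      change fderiv ℝ (fun x => Real.log (p x)) x (f x) = _
      rw [this]
      simp
    rw [h1, mul_inv_cancel_left₀ (hpos x).ne']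
    unfold vdiv
    have h2 : fderiv ℝ (fun x => p x • f x) x
        = p x • fderiv ℝ f x + (fderiv ℝ p x).smulRight (f x) := fderiv_fun_smul hpd hfd
    rw [h2]
    have h3 : (((fderiv ℝ p x).smulRight (f x) : EuclideanSpace ℝ (Fin d) →L[ℝ] EuclideanSpace ℝ (Fin d)) :
        EuclideanSpace ℝ (Fin d) →ₗ[ℝ] EuclideanSpace ℝ (Fin d))
        = LinearMap.smulRight (fderiv ℝ p x : EuclideanSpace ℝ (Fin d) →ₗ[ℝ] ℝ) (f x) := rfl
    rw [ContinuousLinearMap.toLinearMap_add, ContinuousLinearMap.toLinearMap_smul, map_add, map_smul, h3,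
      LinearMap.trace_smulRight]
    simp [add_comm]
  simp_rw [key] at hDiv
  rw [integral_add hInt1 hInt2] at hDiv
  linarith
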